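/- If O ⊆ F is locally optimal for the constructed MUFL instance with respect to the single-swap neighbourhood, then the truth assignment T_O is locally optimal for the Max 2-Sat instance (B,w) with respect to the flip neighbourhood: no truth assignment obtained from T_O by changing the truth value of a single variable has strictly larger SAT cost. -/

import Mathlib

open Finset
open scoped ENNReal

/-- A literal over `N` variables: a variable index together with a polarity
(`true` = positive literal `x_n`, `false` = negated literal `x̄_n`). -/
abbrev Lit (N : ℕ) := Fin N × Bool

/-- The negation of a literal. -/
def Lit.neg {N : ℕ} (p : Lit N) : Lit N := (p.1, !p.2)

/-- A 2-SAT clause: two literals over distinct variables. -/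
structure Clause (N : ℕ) where
  l1 : Lit N
  l2 : Lit N
  distinct : l1.1 ≠ l2.1

/-- The literal `p` occurs in the clause `cl`. -/
def Clause.occurs {N : ℕ} (p : Lit N) (cl : Clause N) : Prop := p = cl.l1 ∨ p = cl.l2

instance {N : ℕ} (p : Lit N) (cl : Clause N) : Decidable (Clause.occurs p cl) := by
  unfold Clause.occurs; infer_instance

/-- The truth assignment `T` satisfies the clause `cl`. -/
def Clause.satisfied {N : ℕ} (T : Fin N → Bool) (cl : Clause N) : Prop :=
  T cl.l1.1 = cl.l1.2 ∨ T cl.l2.1 = cl.l2.2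

instance {N : ℕ} (T : Fin N → Bool) (cl : Clause N) : Decidable (Clause.satisfied T cl) := by
  unfold Clause.satisfied; infer_instance

/-- The point set of the construction: one point per literal (facility/literal points)
and one point per clause. -/
abbrev Pt (N M : ℕ) := Lit N ⊕ Fin M

/-- The SAT cost `w(B,T)`: total weight of the clauses satisfied by `T`. -/
def satCost {N M : ℕ} (b : Fin M → Clause N) (w : Fin M → ℕ) (T : Fin N → Bool) : ℕ :=
  ∑ m ∈ Finset.univ.filter (fun m => Clause.satisfied T (b m)), w m

/-- The distance function of the constructed MUFL instance. -/
noncomputable def dFL {N M : ℕ} (b : Fin M → Clause N) (w : Fin M → ℕ) (W c : ℝ) :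
    Pt N M → Pt N M → ℝ := fun p q =>
  if p = q then 0
  else
    match p, q with
    | Sum.inl x, Sum.inl y => if x.1 = y.1 then 1 else 2
    | Sum.inl x, Sum.inr m =>
        if Clause.occurs x (b m) then 1 + (w m : ℝ) / W
        else if Clause.occurs (Lit.neg x) (b m) then 1 + c * (w m : ℝ) / W
        else 2
    | Sum.inr m, Sum.inl x =>
        if Clause.occurs x (b m) then 1 + (w m : ℝ) / W
        else if Clause.occurs (Lit.neg x) (b m) then 1 + c * (w m : ℝ) / W
        else 2
    | Sum.inr _, Sum.inr _ => 2

/-- The MUFL cost `φ_FL(C,F,O)` of a set of open facilities `O`: every client connects to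
the nearest open facility (`∞` if no facility is open), plus opening cost `2` per
open facility. -/
noncomputable def phiFL {N M : ℕ} (d : Pt N M → Pt N M → ℝ) (O : Finset (Lit N)) : ℝ≥0∞ :=
  (∑ p : Pt N M, ⨅ o ∈ O, ENNReal.ofReal (d p (Sum.inl o))) + 2 * (O.card : ℝ≥0∞)

/-- A set of open facilities is reasonable if it has size `N` and contains a facility
corresponding to each variable. -/
def ReasonableFL {N : ℕ} (O : Finset (Lit N)) : Prop :=
  O.card = N ∧ ∀ n : Fin N, (n, true) ∈ O ∨ (n, false) ∈ O

/-- The truth assignment `T_O` induced by a set of open facilities: `x_n` is true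
iff the facility `x_n` is open. -/
def assignOf {N : ℕ} (O : Finset (Lit N)) : Fin N → Bool :=
  fun n => decide ((n, true) ∈ O)

/-!
Keeping both facilities of a variable open is wasteful: closing one of them saves `2` and costs the
clients at most `1 + (c - 1) * (∑ w) / W < 2`. Keeping both closed is wasteful too: opening one of
them costs `2` and saves its two literal clients `2 + 1`. Hence a locally optimal `O` contains
exactly one facility per variable, namely the literals that are true under `T_O`. The cost of the
set of true literals of `T` is a constant minus `(c - 1) / W` times the SAT cost of `T`, and
swapping the two literals of a variable flips that variable.
-/

section FacilityLocation

variable {α β : Type*} {d : α → β → ℝ} {O A : Finset β} {p : α}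

/-- The connection cost `min_{o ∈ O} d(p, o)` of the client `p`, as a real number. For `O = ∅` this
is the junk value `0`, whereas `phiFL` charges `∞`. -/
noncomputable def connCost (d : α → β → ℝ) (O : Finset β) (p : α) : ℝ := ⨅ o : O, d p o

lemma connCost_le {o : β} (ho : o ∈ O) : connCost d O p ≤ d p o :=
  ciInf_le (Set.finite_range fun o : O => d p o).bddBelow ⟨o, ho⟩

lemma le_connCost (hO : O.Nonempty) {r : ℝ} (h : ∀ o ∈ O, r ≤ d p o) : r ≤ connCost d O p :=
  have : Nonempty O := hO.to_subtype
  le_ciInf fun o => h o o.2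

lemma connCost_nonneg (hd : ∀ o, 0 ≤ d p o) : 0 ≤ connCost d O p :=
  Real.iInf_nonneg fun o => hd o

lemma connCost_eq_of_forall_le {o : β} (ho : o ∈ O) (h : ∀ o' ∈ O, d p o ≤ d p o') :
    connCost d O p = d p o :=
  le_antisymm (connCost_le ho) (le_connCost ⟨o, ho⟩ h)

lemma connCost_anti (hO : O.Nonempty) (hOA : O ⊆ A) : connCost d A p ≤ connCost d O p :=
  le_connCost hO fun _ ho => connCost_le (hOA ho)

lemma ofReal_connCost (hO : O.Nonempty) :
    ENNReal.ofReal (connCost d O p) = ⨅ o ∈ O, ENNReal.ofReal (d p o) := by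
  have : Nonempty O := hO.to_subtype
  rw [connCost, ENNReal.ofReal_iInf, iInf_subtype]

lemma connCost_erase_le [DecidableEq β] {a a' : β} (ha' : a' ∈ O) (hne : a' ≠ a) {δ : ℝ}
    (hδ₀ : 0 ≤ δ) (hδ : d p a' ≤ d p a + δ) : connCost d (O.erase a) p ≤ connCost d O p + δ := by
  rw [← sub_le_iff_le_add]
  refine le_connCost ⟨a', ha'⟩ fun o ho => sub_le_iff_le_add.2 ?_
  rcases eq_or_ne o a with rfl | hoa
  · exact (connCost_le (mem_erase.2 ⟨hne, ha'⟩)).trans hδ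
  · exact (connCost_le (mem_erase.2 ⟨hoa, ho⟩)).trans (le_add_of_nonneg_right hδ₀)

variable [Fintype α]

/-- The cost of a set of open facilities in the metric uncapacitated facility location problem with
uniform opening cost `f`, as a real number. -/
noncomputable def facilityCost (f : ℝ) (d : α → β → ℝ) (O : Finset β) : ℝ :=
  ∑ p, connCost d O p + f * #O

variable {f : ℝ}

lemma facilityCost_nonneg (hf : 0 ≤ f) (hd : ∀ p o, 0 ≤ d p o) : 0 ≤ facilityCost f d O :=
  add_nonneg (sum_nonneg fun p _ => connCost_nonneg (hd p)) (mul_nonneg hf (#O).cast_nonneg)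

variable [DecidableEq β]

lemma facilityCost_erase_lt {a a' : β} (ha : a ∈ O) (ha' : a' ∈ O) (hne : a' ≠ a) {δ : α → ℝ}
    (hδ₀ : ∀ p, 0 ≤ δ p) (hδ : ∀ p, d p a' ≤ d p a + δ p) (hf : ∑ p, δ p < f) :
    facilityCost f d (O.erase a) < facilityCost f d O := by
  have hconn : ∑ p, connCost d (O.erase a) p ≤ ∑ p, connCost d O p + ∑ p, δ p := by
    rw [← sum_add_distrib]
    exact sum_le_sum fun p _ => connCost_erase_le ha' hne (hδ₀ p) (hδ p)
  have hcard : (#(O.erase a) : ℝ) + 1 = #O := mod_cast card_erase_add_one ha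
  rw [facilityCost, facilityCost, ← hcard]
  linarith

lemma facilityCost_insert_lt {a : β} (ha : a ∉ O) (hO : O.Nonempty) {S : Finset α} {γ : α → ℝ}
    (hγ : ∀ p ∈ S, ∀ o ∈ O, d p a + γ p ≤ d p o) (hf : f < ∑ p ∈ S, γ p) :
    facilityCost f d (insert a O) < facilityCost f d O := by
  classical
  have hconn : ∑ p, connCost d (insert a O) p + ∑ p ∈ S, γ p ≤ ∑ p, connCost d O p := by
    rw [← sum_add_sum_compl S, ← sum_add_sum_compl S (connCost d O), add_right_comm,
      ← sum_add_distrib]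
    refine add_le_add (sum_le_sum fun p hp => le_connCost hO fun o ho => ?_)
      (sum_le_sum fun p _ => connCost_anti hO (subset_insert a O))
    exact (add_le_add_left (connCost_le (mem_insert_self a O)) _).trans (hγ p hp o ho)
  have hcard : (#(insert a O) : ℝ) = #O + 1 := mod_cast card_insert_of_notMem ha
  rw [facilityCost, facilityCost, hcard]
  linarith

end FacilityLocation

section RealCost

variable {N M : ℕ} {d : Pt N M → Pt N M → ℝ} {O A : Finset (Lit N)}

lemma phiFL_eq_ofReal (hd : ∀ p q, 0 ≤ d p q) (hO : O.Nonempty) :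
    phiFL d O = ENNReal.ofReal (facilityCost 2 (fun p x => d p (Sum.inl x)) O) := by
  have hconn (p : Pt N M) : 0 ≤ connCost (fun p x => d p (Sum.inl x)) O p :=
    connCost_nonneg fun x => hd p (Sum.inl x)
  rw [facilityCost, ENNReal.ofReal_add (sum_nonneg fun p _ => hconn p) (by positivity),
    ENNReal.ofReal_sum_of_nonneg fun p _ => hconn p, ENNReal.ofReal_mul zero_le_two,
    ENNReal.ofReal_natCast, ENNReal.ofReal_ofNat]
  simp only [ofReal_connCost hO, phiFL]

lemma phiFL_lt_phiFL_iff (hd : ∀ p q, 0 ≤ d p q) (hA : A.Nonempty) (hO : O.Nonempty) :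
    phiFL d A < phiFL d O ↔
      facilityCost 2 (fun p x => d p (Sum.inl x)) A <
        facilityCost 2 (fun p x => d p (Sum.inl x)) O := by
  rw [phiFL_eq_ofReal hd hA, phiFL_eq_ofReal hd hO, ENNReal.ofReal_lt_ofReal_iff_of_nonneg
    (facilityCost_nonneg zero_le_two fun p x => hd p (Sum.inl x))]

lemma phiFL_empty [Nonempty (Pt N M)] (d : Pt N M → Pt N M → ℝ) : phiFL d ∅ = ⊤ := by
  obtain ⟨p⟩ := ‹Nonempty (Pt N M)›
  rw [phiFL, ENNReal.sum_eq_top.2 ⟨p, mem_univ p, by simp⟩, top_add]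

end RealCost

namespace Lit

variable {N : ℕ}

lemma neg_neg (x : Lit N) : x.neg.neg = x := by simp [Lit.neg]

lemma neg_ne_self (x : Lit N) : x.neg ≠ x := by simp [Lit.neg, Prod.ext_iff]

lemma eq_or_eq_neg_of_fst_eq {x y : Lit N} (h : x.1 = y.1) : x = y ∨ x = y.neg := by
  rcases Bool.eq_or_eq_not x.2 y.2 with hs | hs
  · exact .inl (Prod.ext h hs)
  · exact .inr (Prod.ext h hs)

end Lit

/-- The literals that are true under the assignment `T`, as the set of open facilities that
encodes `T`. -/
def trueLits {N : ℕ} (T : Fin N → Bool) : Finset (Lit N) := univ.filter fun x => T x.1 = x.2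

section TrueLits

variable {N : ℕ} {T : Fin N → Bool}

lemma mem_trueLits {x : Lit N} : x ∈ trueLits T ↔ T x.1 = x.2 := by simp [trueLits]

lemma neg_mem_trueLits {x : Lit N} : x.neg ∈ trueLits T ↔ x ∉ trueLits T := by
  rw [mem_trueLits, mem_trueLits]
  exact Bool.eq_not

lemma trueLits_eq_image (T : Fin N → Bool) : trueLits T = univ.image fun n => (n, T n) := by
  ext ⟨n, v⟩
  simp [mem_trueLits]

lemma card_trueLits (T : Fin N → Bool) : #(trueLits T) = N := by
  rw [trueLits_eq_image, card_image_of_injective _ fun _ _ h => congrArg Prod.fst h, card_univ,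
    Fintype.card_fin]

lemma trueLits_nonempty [Nonempty (Fin N)] (T : Fin N → Bool) : (trueLits T).Nonempty :=
  ‹Nonempty (Fin N)›.elim fun n => ⟨(n, T n), mem_trueLits.2 rfl⟩

lemma trueLits_assignOf {O : Finset (Lit N)} (h : ∀ x : Lit N, x.neg ∈ O ↔ x ∉ O) :
    trueLits (assignOf O) = O := by
  ext ⟨n, v⟩
  have hn : (n, false) ∈ O ↔ (n, true) ∉ O := h (n, true)
  cases v <;> simp [mem_trueLits, assignOf, hn]

lemma trueLits_update_not (T : Fin N → Bool) (n : Fin N) :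
    trueLits (Function.update T n (!T n)) = insert (n, !T n) ((trueLits T).erase (n, T n)) := by
  ext ⟨k, v⟩
  rcases eq_or_ne k n with rfl | hk
  · cases h : T k <;> cases v <;> simp [mem_trueLits, h]
  · simp [mem_trueLits, hk]

end TrueLits

namespace Clause

variable {N : ℕ} {T : Fin N → Bool} {cl : Clause N} {x : Lit N}

lemma not_occurs_neg (h : occurs x cl) : ¬ occurs x.neg cl := by
  have hvar {y z : Lit N} (hy : x = y) (hz : x.neg = z) : y.1 = z.1 := by rw [← hy, ← hz]; rfl
  rintro (h' | h') <;> rcases h with h | h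
  · exact x.neg_ne_self (h'.trans h.symm)
  · exact cl.distinct (hvar h h').symm
  · exact cl.distinct (hvar h h')
  · exact x.neg_ne_self (h'.trans h.symm)

lemma satisfied_iff_exists_occurs : satisfied T cl ↔ ∃ x ∈ trueLits T, occurs x cl := by
  simp [satisfied, occurs, mem_trueLits, -Prod.exists, and_or_left, exists_or]

end Clause

section Construction

variable {N M : ℕ} {b : Fin M → Clause N} {w : Fin M → ℕ} {W c : ℝ}

/-- The distance from a client to a facility in the constructed instance. -/
noncomputable abbrev litDist (b : Fin M → Clause N) (w : Fin M → ℕ) (W c : ℝ)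
    (p : Pt N M) (x : Lit N) : ℝ := dFL b w W c p (Sum.inl x)

lemma dFL_nonneg (hW : 0 ≤ W) (hc : 0 ≤ c) (p q : Pt N M) : 0 ≤ dFL b w W c p q := by
  unfold dFL
  rcases p with x | m <;> rcases q with y | k <;> dsimp only <;> split_ifs <;> positivity

lemma litDist_inl (x y : Lit N) :
    litDist b w W c (Sum.inl x) y = if x = y then 0 else if x.1 = y.1 then 1 else 2 := by
  simp [litDist, dFL]

lemma litDist_inr (m : Fin M) (x : Lit N) :
    litDist b w W c (Sum.inr m) x =
      if Clause.occurs x (b m) then 1 + w m / W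
      else if Clause.occurs x.neg (b m) then 1 + c * w m / W else 2 := by
  simp [litDist, dFL]

lemma litDist_inl_of_fst_ne {x y : Lit N} (h : x.1 ≠ y.1) :
    litDist b w W c (Sum.inl x) y = 2 := by
  rw [litDist_inl, if_neg (ne_of_apply_ne Prod.fst h), if_neg h]

lemma litDist_inl_neg (x : Lit N) : litDist b w W c (Sum.inl x) x.neg = 1 := by
  rw [litDist_inl, if_neg x.neg_ne_self.symm]
  exact if_pos rfl

lemma pos_of_sub_one_mul_sum_lt (hc : 1 ≤ c) (hsum : (c - 1) * ∑ m, (w m : ℝ) < W) : 0 < W :=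
  (mul_nonneg (sub_nonneg.2 hc) (sum_nonneg fun m _ => (w m).cast_nonneg)).trans_lt hsum

lemma sub_one_mul_div_nonneg (hW : 0 ≤ W) (hc : 1 ≤ c) (m : Fin M) : 0 ≤ (c - 1) * w m / W :=
  div_nonneg (mul_nonneg (sub_nonneg.2 hc) (w m).cast_nonneg) hW

lemma litDist_inl_neg_le (x y : Lit N) :
    litDist b w W c (Sum.inl y) x.neg ≤
      litDist b w W c (Sum.inl y) x + if y = x then 1 else 0 := by
  have hvar : x.neg.1 = x.1 := rfl
  rw [litDist_inl, litDist_inl, hvar]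
  rcases eq_or_ne y x with rfl | hyx
  · simp [y.neg_ne_self.symm]
  · simp only [hyx, if_false, add_zero]
    split_ifs <;> norm_num

lemma litDist_inr_neg_le (hW : 0 ≤ W) (hc : 1 ≤ c) (x : Lit N) (m : Fin M) :
    litDist b w W c (Sum.inr m) x.neg ≤ litDist b w W c (Sum.inr m) x + (c - 1) * w m / W := by
  have hgap : c * w m / W = w m / W + (c - 1) * w m / W := by ring
  have hgap₀ : 0 ≤ (c - 1) * w m / W := sub_one_mul_div_nonneg hW hc m
  rw [litDist_inr, litDist_inr, x.neg_neg]
  by_cases hx : Clause.occurs x (b m)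
  · simp only [hx, Clause.not_occurs_neg hx, if_true, if_false]
    linarith
  · simp only [hx, if_false]
    split_ifs <;> linarith

lemma phiFL_erase_lt (hc : 1 ≤ c) (hsum : (c - 1) * ∑ m, (w m : ℝ) < W) {O : Finset (Lit N)}
    {x : Lit N} (hx : x ∈ O) (hx' : x.neg ∈ O) :
    phiFL (dFL b w W c) (O.erase x) < phiFL (dFL b w W c) O := by
  have hW : 0 < W := pos_of_sub_one_mul_sum_lt hc hsum
  rw [phiFL_lt_phiFL_iff (dFL_nonneg hW.le (zero_le_one.trans hc))
    ⟨x.neg, mem_erase.2 ⟨x.neg_ne_self, hx'⟩⟩ ⟨x, hx⟩]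
  refine facilityCost_erase_lt hx hx' x.neg_ne_self
    (δ := Sum.elim (fun y => if y = x then 1 else 0) fun m => (c - 1) * w m / W) ?_ ?_ ?_
  · rintro (y | m) <;> dsimp only [Sum.elim_inl, Sum.elim_inr]
    · positivity
    · exact sub_one_mul_div_nonneg hW.le hc m
  · rintro (y | m)
    · exact litDist_inl_neg_le x y
    · exact litDist_inr_neg_le hW.le hc x m
  · have hclause : ∑ m, (c - 1) * w m / W < 1 := by
      rwa [← sum_div, ← mul_sum, div_lt_one hW]
    simp only [Fintype.sum_sum_type, Sum.elim_inl, Sum.elim_inr, sum_ite_eq', mem_univ, if_true]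
    linarith

lemma phiFL_insert_lt (hW : 0 ≤ W) (hc : 0 ≤ c) {O : Finset (Lit N)} {x : Lit N} (hx : x ∉ O)
    (hx' : x.neg ∉ O) : phiFL (dFL b w W c) (insert x O) < phiFL (dFL b w W c) O := by
  have hd := dFL_nonneg (b := b) (w := w) hW hc
  have hins : (insert x O).Nonempty := insert_nonempty x O
  rcases O.eq_empty_or_nonempty with rfl | hO
  · have : Nonempty (Pt N M) := ⟨Sum.inl x⟩
    rw [phiFL_empty, phiFL_eq_ofReal hd hins]
    exact ENNReal.ofReal_lt_top
  have hvar {o : Lit N} (ho : o ∈ O) : x.1 ≠ o.1 := fun h => by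
    rcases Lit.eq_or_eq_neg_of_fst_eq h.symm with rfl | rfl <;> contradiction
  rw [phiFL_lt_phiFL_iff hd hins hO]
  refine facilityCost_insert_lt hx hO (S := {Sum.inl x, Sum.inl x.neg})
    (γ := fun p => 2 - litDist b w W c p x) (fun p hp o ho => ?_) ?_
  · rw [add_sub_cancel]
    rcases mem_insert.1 hp with rfl | hp
    · exact (litDist_inl_of_fst_ne (hvar ho)).ge
    · rw [mem_singleton.1 hp]
      exact (litDist_inl_of_fst_ne (x := x.neg) (hvar ho)).ge
  · have hne : (Sum.inl x : Pt N M) ≠ Sum.inl x.neg := Sum.inl_injective.ne x.neg_ne_self.symm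
    have hself : litDist b w W c (Sum.inl x) x = 0 := by rw [litDist_inl, if_pos rfl]
    have hneg : litDist b w W c (Sum.inl x.neg) x = 1 := by
      simpa only [x.neg_neg] using litDist_inl_neg x.neg
    rw [sum_pair hne, hself, hneg]
    norm_num

lemma connCost_trueLits_inl (T : Fin N → Bool) (y : Lit N) :
    connCost (litDist b w W c) (trueLits T) (Sum.inl y) = if T y.1 = y.2 then 0 else 1 := by
  split_ifs with hy
  · rw [connCost_eq_of_forall_le (mem_trueLits.2 hy), litDist_inl, if_pos rfl]
    intro o _
    rw [litDist_inl, if_pos rfl, litDist_inl]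
    split_ifs <;> norm_num
  · have hne {o : Lit N} (ho : o ∈ trueLits T) : y ≠ o := by
      rintro rfl
      exact hy (mem_trueLits.1 ho)
    have hneg : y.neg ∈ trueLits T := neg_mem_trueLits.2 fun h => hne h rfl
    rw [connCost_eq_of_forall_le hneg, litDist_inl_neg]
    intro o ho
    rw [litDist_inl_neg, litDist_inl, if_neg (hne ho)]
    split_ifs <;> norm_num

lemma connCost_trueLits_inr (hW : 0 < W) (hc : 1 ≤ c) {m : Fin M} (hm : c * w m ≤ W)
    (T : Fin N → Bool) :
    connCost (litDist b w W c) (trueLits T) (Sum.inr m) =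
      if Clause.satisfied T (b m) then 1 + w m / W else 1 + c * w m / W := by
  have hcw : c * w m / W ≤ 1 := (div_le_one hW).2 hm
  have hle : w m / W ≤ c * w m / W := by
    gcongr
    exact le_mul_of_one_le_left (w m).cast_nonneg hc
  split_ifs with hsat
  · obtain ⟨x, hxT, hx⟩ := Clause.satisfied_iff_exists_occurs.1 hsat
    rw [connCost_eq_of_forall_le hxT, litDist_inr, if_pos hx]
    intro o _
    rw [litDist_inr, litDist_inr, if_pos hx]
    split_ifs <;> linarith
  · have hnot {x : Lit N} (hx : x ∈ trueLits T) : ¬ Clause.occurs x (b m) := fun h =>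
      hsat (Clause.satisfied_iff_exists_occurs.2 ⟨x, hx, h⟩)
    have hl1 : Clause.occurs (b m).l1 (b m) := .inl rfl
    have hneg : (b m).l1.neg ∈ trueLits T := neg_mem_trueLits.2 fun h => hnot h hl1
    have hdist : litDist b w W c (Sum.inr m) (b m).l1.neg = 1 + c * w m / W := by
      rw [litDist_inr, if_neg (hnot hneg), Lit.neg_neg, if_pos hl1]
    rw [connCost_eq_of_forall_le hneg, hdist]
    intro o ho
    rw [hdist, litDist_inr, if_neg (hnot ho)]
    split_ifs <;> linarith

lemma cast_satCost (b : Fin M → Clause N) (w : Fin M → ℕ) (T : Fin N → Bool) :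
    (satCost b w T : ℝ) = ∑ m, if Clause.satisfied T (b m) then (w m : ℝ) else 0 := by
  rw [satCost, Nat.cast_sum, sum_filter]

lemma facilityCost_trueLits (hW : 0 < W) (hc : 1 ≤ c) (hcw : ∀ m, c * w m ≤ W)
    (T : Fin N → Bool) (f : ℝ) :
    facilityCost f (litDist b w W c) (trueLits T) =
      (1 + f) * N + ∑ m, (1 + c * w m / W) - (c - 1) / W * satCost b w T := by
  have hlit : ∑ y : Lit N, connCost (litDist b w W c) (trueLits T) (Sum.inl y) = N := by
    have hvar (n : Fin N) : ∑ v : Bool, (if T n = v then (0 : ℝ) else 1) = 1 := by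
      cases T n <;> simp
    simp only [connCost_trueLits_inl, Fintype.sum_prod_type, hvar, sum_const, card_univ,
      Fintype.card_fin, nsmul_eq_mul, mul_one]
  have hclause : ∑ m, connCost (litDist b w W c) (trueLits T) (Sum.inr m) =
      ∑ m, (1 + c * w m / W) - (c - 1) / W * satCost b w T := by
    rw [cast_satCost, mul_sum, ← sum_sub_distrib]
    refine sum_congr rfl fun m _ => ?_
    rw [connCost_trueLits_inr hW hc (hcw m)]
    split_ifs <;> ring
  rw [facilityCost, Fintype.sum_sum_type, hlit, hclause, card_trueLits]
  ring

lemma phiFL_trueLits_lt_iff [Nonempty (Fin N)] (hW : 0 < W) (hc : 1 < c)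
    (hcw : ∀ m, c * w m ≤ W) (T T' : Fin N → Bool) :
    phiFL (dFL b w W c) (trueLits T') < phiFL (dFL b w W c) (trueLits T) ↔
      satCost b w T < satCost b w T' := by
  have hslope : 0 < (c - 1) / W := div_pos (sub_pos.2 hc) hW
  rw [phiFL_lt_phiFL_iff (dFL_nonneg hW.le (zero_le_one.trans hc.le)) (trueLits_nonempty T')
    (trueLits_nonempty T), facilityCost_trueLits hW hc.le hcw, facilityCost_trueLits hW hc.le hcw,
    sub_lt_sub_iff_left, mul_lt_mul_iff_right₀ hslope, Nat.cast_lt]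

theorem assignOf_localOpt_of_localOpt_general (hc : 1 < c)
    (hsum : (c - 1) * ∑ m, (w m : ℝ) < W) (hcw : ∀ m, c * w m ≤ W) (O : Finset (Lit N))
    (hopen : ∀ a ∉ O, ¬ phiFL (dFL b w W c) (insert a O) < phiFL (dFL b w W c) O)
    (hclose : ∀ a ∈ O, ¬ phiFL (dFL b w W c) (O.erase a) < phiFL (dFL b w W c) O)
    (hswap : ∀ a ∉ O, ∀ r ∈ O,
      ¬ phiFL (dFL b w W c) (insert a (O.erase r)) < phiFL (dFL b w W c) O) (n : Fin N) :
    satCost b w (Function.update (assignOf O) n (!(assignOf O n))) ≤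
      satCost b w (assignOf O) := by
  have hW : 0 < W := pos_of_sub_one_mul_sum_lt hc.le hsum
  have hone (x : Lit N) : x.neg ∈ O ↔ x ∉ O :=
    ⟨fun hx' hx => hclose x hx (phiFL_erase_lt hc.le hsum hx hx'), fun hx => by_contra fun hx' =>
      hopen x hx (phiFL_insert_lt hW.le (zero_le_one.trans hc.le) hx hx')⟩
  have hO : trueLits (assignOf O) = O := trueLits_assignOf hone
  have hmem : (n, assignOf O n) ∈ O := hO.subset (mem_trueLits.2 rfl)
  have hnotMem : (n, !(assignOf O n)) ∉ O := (hone _).1 (by simpa [Lit.neg] using hmem)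
  have : Nonempty (Fin N) := ⟨n⟩
  rw [← not_lt, ← phiFL_trueLits_lt_iff hW hc hcw, trueLits_update_not, hO]
  exact hswap _ hnotMem _ hmem

end Construction

section Weights

variable {ι : Type*} [Fintype ι] {w : ι → ℕ} {r : ℝ}

lemma mul_sum_lt_card_mul_sup [Nonempty ι] (hw : ∀ i, 0 < w i) (hr : r < 1) :
    r * ∑ i, (w i : ℝ) < Fintype.card ι * (univ.sup w : ℕ) := by
  have hpos : 0 < ∑ i, (w i : ℝ) := sum_pos (fun i _ => Nat.cast_pos.2 (hw i)) univ_nonempty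
  calc r * ∑ i, (w i : ℝ) < ∑ i, (w i : ℝ) := mul_lt_of_lt_one_left hpos hr
    _ ≤ Fintype.card ι * (univ.sup w : ℕ) := mod_cast
      sum_le_card_nsmul univ w _ fun i hi => le_sup hi

lemma mul_le_card_mul_sup (hr : r ≤ Fintype.card ι) (i : ι) :
    r * w i ≤ Fintype.card ι * (univ.sup w : ℕ) :=
  mul_le_mul hr (Nat.cast_le.2 (le_sup (mem_univ i))) (w i).cast_nonneg (Nat.cast_nonneg _)

end Weights

/-- If `O` is locally optimal for the MUFL instance w.r.t. single-swap, then `T_O`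
is locally optimal for the Max-2-SAT instance w.r.t. flipping a single variable. -/
theorem assignOf_localOpt_of_localOpt {N M : ℕ} (hM : 2 ≤ M) (b : Fin M → Clause N) (w : Fin M → ℕ)
    (hw : ∀ m, 0 < w m) (c : ℝ) (hc1 : 1 < c) (hc2 : c < 2)
    (W : ℝ) (hW : W = (M : ℝ) * ((Finset.univ.sup w : ℕ) : ℝ))
    (O : Finset (Lit N))
    (hopen : ∀ a ∉ O, ¬ phiFL (dFL b w W c) (insert a O) < phiFL (dFL b w W c) O)
    (hclose : ∀ a ∈ O, ¬ phiFL (dFL b w W c) (O.erase a) < phiFL (dFL b w W c) O)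
    (hswap : ∀ a ∉ O, ∀ r ∈ O,
      ¬ phiFL (dFL b w W c) (insert a (O.erase r)) < phiFL (dFL b w W c) O) :
    ∀ n : Fin N,
      satCost b w (Function.update (assignOf O) n (!(assignOf O n))) ≤
        satCost b w (assignOf O) := by
  have : Nonempty (Fin M) := ⟨⟨0, by omega⟩⟩
  have hcM : c ≤ Fintype.card (Fin M) := by
    rw [Fintype.card_fin]
    exact hc2.le.trans (mod_cast hM)
  replace hW : W = Fintype.card (Fin M) * (univ.sup w : ℕ) := by rw [hW, Fintype.card_fin]
  exact assignOf_localOpt_of_localOpt_general hc1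
    (hW ▸ mul_sum_lt_card_mul_sup hw (by linarith)) (fun m => hW ▸ mul_le_card_mul_sup hcM m)
    O hopen hclose hswap
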